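/- arXiv:0803.0680 — 2 statements merged into one kernel-verified Lean document; each statement's English description precedes it below -/
import Mathlib

section
/- Let G be a group, E a real Banach space, and M a Banach G-module. Equip ℓ¹(G,E) with the left-translation G-action (g•x)(h) = x(g⁻¹h). Then for every continuous linear map S : E → M there exists a unique G-equivariant continuous linear map T : ℓ¹(G,E) → M such that T(δ₁ v) = S(v) for all v ∈ E, where δ₁ v ∈ ℓ¹(G,E) is the function supported at the identity of G with value v; moreover ‖T‖ = ‖S‖. (Induction is left adjoint to the forgetful functor.) -/
/-!
The map is `T x = ∑ h, h • S (x h)`. Since `G` acts isometrically, `‖h • S (x h)‖ ≤ ‖S‖ ‖x h‖`,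
so the series converges absolutely and `‖T‖ ≤ ‖S‖`; the reindexing `h ↦ g * h` gives equivariance.
Conversely `S` is the restriction of `T` along the isometry `v ↦ δ₁ v`, so `‖S‖ ≤ ‖T‖`.
For uniqueness, `δ_h v` is the translate of `δ₁ v` by `h`, so an equivariant extension of `S` is
forced to be `h • S v` on `δ_h v`, and every `x` in `ℓ¹(G,E)` is the sum of the series
`∑ h, δ_h (x h)`.
-/

theorem hasSum_norm_l1 {G E : Type*} [NormedAddCommGroup E]
    (x : lp (fun _ : G => E) 1) :
    HasSum (fun h => ‖x h‖) ‖x‖ := by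
  simpa using lp.hasSum_norm (p := 1) (by simp) x

section Induction

variable {G E M : Type*} [Group G]
  [NormedAddCommGroup E] [NormedSpace ℝ E]
  [NormedAddCommGroup M] [NormedSpace ℝ M]
  [DistribMulAction G M]

theorem norm_smul_apply_le (hiso : ∀ (g : G) (m : M), ‖g • m‖ = ‖m‖) (S : E →L[ℝ] M)
    (x : lp (fun _ : G => E) 1) (h : G) : ‖h • S (x h)‖ ≤ ‖S‖ * ‖x h‖ := by
  rw [hiso]
  exact S.le_opNorm _

theorem summable_smul_apply [CompleteSpace M] (hiso : ∀ (g : G) (m : M), ‖g • m‖ = ‖m‖)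
    (S : E →L[ℝ] M) (x : lp (fun _ : G => E) 1) : Summable fun h : G => h • S (x h) :=
  Summable.of_norm_bounded ((hasSum_norm_l1 x).summable.mul_left ‖S‖) (norm_smul_apply_le hiso S x)

/-- The map `x ↦ ∑ h, h • S (x h)` from `ℓ¹(G,E)` to `M` induced by `S : E → M`. -/
noncomputable def inducedMap [CompleteSpace M] [SMulCommClass G ℝ M]
    (hiso : ∀ (g : G) (m : M), ‖g • m‖ = ‖m‖) (S : E →L[ℝ] M) :
    lp (fun _ : G => E) 1 →L[ℝ] M :=
  LinearMap.mkContinuous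
    { toFun := fun x => ∑' h : G, h • S (x h)
      map_add' := fun x y => by
        rw [← (summable_smul_apply hiso S x).tsum_add (summable_smul_apply hiso S y)]
        simp
      map_smul' := fun c x => by
        rw [RingHom.id_apply, ← (summable_smul_apply hiso S x).tsum_const_smul c]
        simp [smul_comm] }
    ‖S‖
    (fun x => tsum_of_norm_bounded ((hasSum_norm_l1 x).mul_left ‖S‖) (norm_smul_apply_le hiso S x))

theorem inducedMap_apply [CompleteSpace M] [SMulCommClass G ℝ M]
    (hiso : ∀ (g : G) (m : M), ‖g • m‖ = ‖m‖) (S : E →L[ℝ] M) (x : lp (fun _ : G => E) 1) :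
    inducedMap hiso S x = ∑' h : G, h • S (x h) := rfl

theorem norm_inducedMap_le [CompleteSpace M] [SMulCommClass G ℝ M]
    (hiso : ∀ (g : G) (m : M), ‖g • m‖ = ‖m‖) (S : E →L[ℝ] M) : ‖inducedMap hiso S‖ ≤ ‖S‖ :=
  LinearMap.mkContinuous_norm_le _ (norm_nonneg S) _

theorem inducedMap_equivariant [CompleteSpace M] [SMulCommClass G ℝ M]
    (hiso : ∀ (g : G) (m : M), ‖g • m‖ = ‖m‖) (S : E →L[ℝ] M)
    (g : G) (x y : lp (fun _ : G => E) 1) (hxy : ∀ h : G, y h = x (g⁻¹ * h)) :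
    inducedMap hiso S y = g • inducedMap hiso S x := by
  have hcont : Continuous (DistribSMul.toAddMonoidHom M g) :=
    (AddMonoidHomClass.isometry_of_norm _ (hiso g)).continuous
  have hmap := (summable_smul_apply hiso S x).hasSum.map (DistribSMul.toAddMonoidHom M g) hcont
  rw [inducedMap_apply, inducedMap_apply, ← (Equiv.mulLeft g).tsum_eq]
  refine Eq.trans ?_ hmap.tsum_eq
  simp [hxy, mul_smul]

theorem inducedMap_delta [CompleteSpace M] [SMulCommClass G ℝ M]
    (hiso : ∀ (g : G) (m : M), ‖g • m‖ = ‖m‖) (S : E →L[ℝ] M)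
    (d : lp (fun _ : G => E) 1) (hd : ∀ h : G, h ≠ 1 → d h = 0) :
    inducedMap hiso S d = S (d 1) := by
  rw [inducedMap_apply, tsum_eq_single 1 (fun h hh => by simp [hd h hh]), one_smul]

end Induction

/-- Let `G` be a group, `E` a real Banach space and `M` a Banach `G`-module.
Equip `ℓ¹(G,E) = lp (fun _ : G => E) 1` with the left translation action
`(g • x) h = x (g⁻¹ * h)`. For every continuous linear map `S : E → M` there is a unique
`G`-equivariant continuous linear map `T : ℓ¹(G,E) → M` with `T (δ₁ v) = S v` for all
`v : E` (where `δ₁ v` is supported at `1` with value `v`); moreover `‖T‖ = ‖S‖`.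
(Induction is left adjoint to the forgetful functor.)  Equivariance and the defining
property are stated via arbitrary representatives of `g • x` and `δ₁ v`. -/
theorem stmt_11 {G E M : Type*} [Group G]
    [NormedAddCommGroup E] [NormedSpace ℝ E] [CompleteSpace E]
    [NormedAddCommGroup M] [NormedSpace ℝ M] [CompleteSpace M]
    [DistribMulAction G M] [SMulCommClass G ℝ M]
    (hiso : ∀ (g : G) (m : M), ‖g • m‖ = ‖m‖)
    (S : E →L[ℝ] M) :
    ∃ T : lp (fun _ : G => E) 1 →L[ℝ] M,
      ((∀ (g : G) (x y : lp (fun _ : G => E) 1),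
          (∀ h : G, y h = x (g⁻¹ * h)) → T y = g • T x) ∧
        (∀ (v : E) (d : lp (fun _ : G => E) 1),
          (d 1 = v ∧ ∀ h : G, h ≠ 1 → d h = 0) → T d = S v)) ∧
      (∀ T' : lp (fun _ : G => E) 1 →L[ℝ] M,
        ((∀ (g : G) (x y : lp (fun _ : G => E) 1),
            (∀ h : G, y h = x (g⁻¹ * h)) → T' y = g • T' x) ∧
          (∀ (v : E) (d : lp (fun _ : G => E) 1),
            (d 1 = v ∧ ∀ h : G, h ≠ 1 → d h = 0) → T' d = S v)) → T' = T) ∧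
      ‖T‖ = ‖S‖ := by
  classical
  have hdelta : ∀ v : E, (lp.single (E := fun _ : G => E) 1 1 v) 1 = v ∧
      ∀ h : G, h ≠ 1 → (lp.single (E := fun _ : G => E) 1 1 v) h = 0 := fun v =>
    ⟨lp.single_apply_self (E := fun _ : G => E) 1 1 v,
      fun h hh => lp.single_apply_ne (E := fun _ : G => E) 1 1 v hh⟩
  have hT : ∀ (v : E) (d : lp (fun _ : G => E) 1),
      (d 1 = v ∧ ∀ h : G, h ≠ 1 → d h = 0) → inducedMap hiso S d = S v := by
    rintro v d ⟨rfl, hd⟩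
    exact inducedMap_delta hiso S d hd
  refine ⟨inducedMap hiso S, ⟨inducedMap_equivariant hiso S, hT⟩, ?_, ?_⟩
  · rintro T' ⟨hequiv, hone⟩
    ext x
    have hsum := (lp.hasSum_single (p := 1) ENNReal.one_ne_top x).mapL T'
    rw [inducedMap_apply, ← hsum.tsum_eq]
    refine tsum_congr fun h => ?_
    -- `δ_h v` is the translate of `δ₁ v` by `h`.
    rw [hequiv h (lp.single 1 1 (x h)) (lp.single 1 h (x h)), hone _ _ (hdelta _)]
    intro k
    by_cases hk : k = h
    · subst hk
      simp
    · rw [lp.single_apply_ne 1 h _ hk, lp.single_apply_ne 1 1 _]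
      rwa [Ne, inv_mul_eq_one, eq_comm]
  · refine le_antisymm (norm_inducedMap_le hiso S)
      (S.opNorm_le_bound (norm_nonneg _) fun v => ?_)
    rw [← hT v _ (hdelta v)]
    refine ((inducedMap hiso S).le_opNorm _).trans_eq ?_
    rw [lp.norm_single one_pos]
end

section
/- Let S be a set (or type), let q : X → Y be a surjective continuous linear map between real Banach spaces, and suppose C > 0 is such that for every y ∈ Y there exists x ∈ X with q(x) = y and ‖x‖ ≤ C‖y‖. Then for every continuous linear map f : ℓ¹(S) → Y there exists a continuous linear map h : ℓ¹(S) → X with q ∘ h = f and ‖h‖ ≤ C‖f‖. (ℓ¹(S) is a projective Banach space.) -/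
/-!
Write `e s` for the unit vectors of `ℓ¹(S)`. Choosing for each `s` a lift `x s` of `f (e s)` with
`‖x s‖ ≤ C * ‖f (e s)‖ ≤ C * ‖f‖` gives a bounded family in `X`, so `a ↦ ∑ a s • x s` converges
absolutely and defines an operator of norm at most `C * ‖f‖` (`exists_lp_one_clm`). It lifts `f`
because `a = ∑ a s • e s` in `ℓ¹(S)` and `q`, `f` are continuous.
-/

/-- A family in a Banach space bounded by `M` extends to an operator on `ℓ¹(S)` of norm
at most `M`, given by `a ↦ ∑ a s • x s`. -/
theorem exists_lp_one_clm {S X : Type*} [NormedAddCommGroup X] [NormedSpace ℝ X] [CompleteSpace X]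
    (x : S → X) (M : ℝ) (hM : 0 ≤ M) (hx : ∀ s, ‖x s‖ ≤ M) :
    ∃ h : lp (fun _ : S => ℝ) 1 →L[ℝ] X,
      (∀ a : lp (fun _ : S => ℝ) 1, HasSum (fun s => a s • x s) (h a)) ∧ ‖h‖ ≤ M := by
  have hnorm (a : lp (fun _ : S => ℝ) 1) : HasSum (fun s => ‖a s‖) ‖a‖ := by
    simpa using lp.hasSum_norm (p := 1) (by simp) a
  have hle (a : lp (fun _ : S => ℝ) 1) (s : S) : ‖a s • x s‖ ≤ M * ‖a s‖ := by
    rw [norm_smul, mul_comm]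
    exact mul_le_mul_of_nonneg_right (hx s) (norm_nonneg _)
  have hsum (a : lp (fun _ : S => ℝ) 1) : Summable (fun s => a s • x s) :=
    Summable.of_norm_bounded ((hnorm a).summable.mul_left M) (hle a)
  let L : lp (fun _ : S => ℝ) 1 →ₗ[ℝ] X :=
    { toFun := fun a => ∑' s, a s • x s
      map_add' := fun a b => by
        rw [← (hsum a).tsum_add (hsum b)]
        exact tsum_congr fun s => by simp [add_smul]
      map_smul' := fun c a => by
        rw [RingHom.id_apply, ← (hsum a).tsum_const_smul c]
        exact tsum_congr fun s => by simp [mul_smul] }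
  have hL (a : lp (fun _ : S => ℝ) 1) : ‖L a‖ ≤ M * ‖a‖ :=
    tsum_of_norm_bounded ((hnorm a).mul_left M) (hle a)
  exact ⟨L.mkContinuous M hL, fun a => (hsum a).hasSum, L.mkContinuous_norm_le hM hL⟩

/-- Let `S` be a type, `q : X → Y` a surjective continuous linear map between
real Banach spaces, and `C > 0` such that every `y : Y` admits a preimage `x` with
`‖x‖ ≤ C * ‖y‖`. Then every continuous linear map `f : ℓ¹(S) → Y` lifts to a continuous
linear map `h : ℓ¹(S) → X` with `q ∘ h = f` and `‖h‖ ≤ C * ‖f‖`.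
(`ℓ¹(S)` is a projective Banach space.) -/
theorem stmt_17 {S X Y : Type*}
    [NormedAddCommGroup X] [NormedSpace ℝ X] [CompleteSpace X]
    [NormedAddCommGroup Y] [NormedSpace ℝ Y] [CompleteSpace Y]
    (q : X →L[ℝ] Y) (hq : Function.Surjective q)
    (C : ℝ) (hC : 0 < C)
    (hlift : ∀ y : Y, ∃ x : X, q x = y ∧ ‖x‖ ≤ C * ‖y‖)
    (f : lp (fun _ : S => ℝ) 1 →L[ℝ] Y) :
    ∃ h : lp (fun _ : S => ℝ) 1 →L[ℝ] X, q.comp h = f ∧ ‖h‖ ≤ C * ‖f‖ := by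
  classical
  let e : S → lp (fun _ : S => ℝ) 1 := fun s => lp.single 1 s (1 : ℝ)
  have he (s : S) : ‖e s‖ = 1 := by
    exact (lp.norm_single (E := fun _ : S => ℝ) (p := 1) one_pos s (1 : ℝ)).trans norm_one
  choose x hqx hx using fun s => hlift (f (e s))
  have hxM (s : S) : ‖x s‖ ≤ C * ‖f‖ :=
    (hx s).trans (mul_le_mul_of_nonneg_left (f.unit_le_opNorm _ (he s).le) hC.le)
  obtain ⟨h, hh, hnorm⟩ := exists_lp_one_clm x (C * ‖f‖) (by positivity) hxM
  refine ⟨h, ContinuousLinearMap.ext fun a => ?_, hnorm⟩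
  have h1 : HasSum (fun s => q (a s • x s)) (q (h a)) := q.hasSum (hh a)
  have h2 : HasSum (fun s => f (lp.single 1 s (a s))) (f a) :=
    f.hasSum (lp.hasSum_single ENNReal.one_ne_top a)
  have h3 (s : S) : f (lp.single 1 s (a s)) = q (a s • x s) := by
    have : (lp.single 1 s (a s) : lp (fun _ : S => ℝ) 1) = a s • e s := by
      rw [← lp.single_smul, smul_eq_mul, mul_one]
    rw [this, map_smul, map_smul, hqx]
  simp only [h3] at h2
  exact h1.unique h2
end
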